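/- Let D be the unit disk, λ > 1/|D|, Ω > 0, and let w^λ be a maximizer of ℰ over K_λ(D). Then w^λ is the unique maximizer over K_λ(D) of the linear functional Q(w) = ∫_D (Gw^λ(x) + (Ω/2)|x|²) w(x) dx. -/

import Mathlib

open MeasureTheory Real Set Filter Topology ENNReal
noncomputable section
abbrev E2 := EuclideanSpace ℝ (Fin 2)
def diskD : Set E2 := Metric.ball 0 1
def greenh (x y : E2) : ℝ := -(1/(2*π)) * Real.log ‖y‖ - (1/(2*π)) * Real.log ‖x - (‖y‖^2)⁻¹ • y‖
def greenG (x y : E2) : ℝ := -(1/(2*π)) * Real.log ‖x - y‖ - greenh x y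
def muD : Measure E2 := volume.restrict diskD
def Kset (lam : ℝ) : Set (E2 → ℝ) :=
  {w | AEMeasurable w muD ∧ (∀ᵐ x ∂muD, 0 ≤ w x ∧ w x ≤ lam) ∧ ∫ x, w x ∂muD = 1}
def Efun (w : E2 → ℝ) : ℝ := (1/2) * ∫ x in diskD, ∫ y in diskD, greenG x y * w x * w y
def calE (Ω : ℝ) (w : E2 → ℝ) : ℝ := Efun w + (Ω/2) * ∫ x in diskD, ‖x‖^2 * w x
/-- The linearized functional Q(w) = ∫_D (Gw^λ + (Ω/2)|x|²) w. -/
def calQ (Ω : ℝ) (wlam w : E2 → ℝ) : ℝ :=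
  ∫ x in diskD, ((∫ y in diskD, greenG x y * wlam y) + (Ω/2) * ‖x‖^2) * w x


open ComplexConjugate

/-- The point of the plane as a complex number. -/
def zc (x : E2) : ℂ := ⟨x 0, x 1⟩
def pp (x : E2) : ℝ := 1 - ‖x‖^2
def kk (x y : E2) : ℝ := pp x * pp y / Complex.normSq (1 - zc x * conj (zc y))

lemma norm_sq_coord (x : E2) : ‖x‖^2 = x 0 ^2 + x 1 ^2 := by
  rw [EuclideanSpace.norm_sq_eq]; simp [Fin.sum_univ_two]

lemma norm_zc (x : E2) : ‖zc x‖ = ‖x‖ := by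
  have : ‖zc x‖^2 = ‖x‖^2 := by
    rw [norm_sq_coord, ← Complex.normSq_eq_norm_sq, Complex.normSq_apply]; simp [zc]; ring
  exact (sq_eq_sq₀ (norm_nonneg _) (norm_nonneg _)).1 this

lemma continuous_zc : Continuous zc := by
  have h : zc = fun x : E2 => ((x 0 : ℝ) : ℂ) + ((x 1 : ℝ) : ℂ) * Complex.I := by
    funext x
    exact Complex.mk_eq_add_mul_I _ _
  rw [h]; fun_prop

lemma continuous_pp : Continuous pp := by unfold pp; fun_prop

lemma normSq_den (x y : E2) :
    Complex.normSq (1 - zc x * conj (zc y)) = ‖x - y‖^2 + pp x * pp y := by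
  simp only [pp, norm_sq_coord, Complex.normSq_apply, zc]
  simp
  ring

lemma norm_starpt (x y : E2) (hy : y ≠ 0) :
    (‖y‖ * ‖x - (‖y‖^2)⁻¹ • y‖)^2 = Complex.normSq (1 - zc x * conj (zc y)) := by
  have hy' : ‖y‖^2 ≠ 0 := by positivity
  rw [mul_pow, norm_sq_coord (x - _)]
  simp only [PiLp.sub_apply, PiLp.smul_apply, smul_eq_mul, normSq_den, pp, norm_sq_coord (x-y), norm_sq_coord x]
  rw [show ‖y‖^2 * ((x 0 - (‖y‖ ^ 2)⁻¹ * y 0) ^ 2 + (x 1 - (‖y‖ ^ 2)⁻¹ * y 1) ^ 2)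
    = ‖y‖^2 * (x 0 ^2 + x 1 ^2) - 2 * (‖y‖^2 * (‖y‖^2)⁻¹) * (x 0 * y 0 + x 1 * y 1)
      + (‖y‖^2 * (‖y‖^2)⁻¹) * ((‖y‖^2)⁻¹ * (y 0 ^2 + y 1 ^2)) by ring, ← norm_sq_coord y,
    mul_inv_cancel₀ hy', inv_mul_cancel₀ hy']
  rw [norm_sq_coord y]; ring

lemma pp_pos {x : E2} (hx : x ∈ diskD) : 0 < pp x := by
  have : ‖x‖ < 1 := by simpa [diskD] using hx
  unfold pp; nlinarith [norm_nonneg x]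

lemma one_sub_kk {x y : E2} (hx : x ∈ diskD) (hy : y ∈ diskD) :
    1 - kk x y = ‖x - y‖^2 / Complex.normSq (1 - zc x * conj (zc y)) := by
  have h1 := mul_pos (pp_pos hx) (pp_pos hy)
  unfold kk
  rw [normSq_den]
  have : ‖x - y‖^2 + pp x * pp y ≠ 0 := by positivity
  field_simp; ring

lemma greenG_eq {x y : E2} (hx : x ∈ diskD) (hy : y ∈ diskD) (hy0 : y ≠ 0) (hxy : x ≠ y) :
    greenG x y = (1/(4*π)) * (-Real.log (1 - kk x y)) := by
  have h1 := mul_pos (pp_pos hx) (pp_pos hy)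
  have hs := norm_starpt x y hy0
  have hD : 0 < Complex.normSq (1 - zc x * conj (zc y)) := by
    rw [normSq_den]; positivity
  have hyn : ‖y‖ ≠ 0 := by simpa using hy0
  have hxn : ‖x - y‖ ≠ 0 := by simpa [sub_eq_zero] using hxy
  have hsn : ‖x - (‖y‖^2)⁻¹ • y‖ ≠ 0 := by
    intro h; rw [h] at hs; simp at hs; linarith [hs]
  rw [one_sub_kk hx hy, Real.log_div (by positivity) hD.ne', ← hs, Real.log_pow, Real.log_pow,
    Real.log_mul hyn hsn]
  unfold greenG greenh
  have := Real.pi_ne_zero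
  push_cast
  field_simp
  ring

lemma kk_nonneg {x y : E2} (hx : x ∈ diskD) (hy : y ∈ diskD) : 0 ≤ kk x y := by
  have h1 := mul_pos (pp_pos hx) (pp_pos hy)
  exact div_nonneg h1.le (Complex.normSq_nonneg _)

lemma kk_lt_one {x y : E2} (hx : x ∈ diskD) (hy : y ∈ diskD) (hxy : x ≠ y) : kk x y < 1 := by
  have h1 := mul_pos (pp_pos hx) (pp_pos hy)
  have hxn : ‖x - y‖ ≠ 0 := by simpa [sub_eq_zero] using hxy
  have := one_sub_kk hx hy
  have h2 : 0 < ‖x - y‖^2 / Complex.normSq (1 - zc x * conj (zc y)) := by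
    rw [normSq_den]; positivity
  linarith

lemma kk_symm (x y : E2) : kk x y = kk y x := by
  unfold kk; rw [normSq_den, normSq_den, norm_sub_rev, mul_comm (pp x)]

/-- pointwise bound for the log kernel -/
lemma log_bound {x y : E2} (hx : x ∈ diskD) (hy : y ∈ diskD) (hxy : x ≠ y) :
    0 ≤ -Real.log (1 - kk x y) ∧ -Real.log (1 - kk x y) ≤ 4 * ‖x - y‖⁻¹ := by
  have hk0 := kk_nonneg hx hy
  have hk1 := kk_lt_one hx hy hxy
  have h1 := mul_pos (pp_pos hx) (pp_pos hy)
  have hxn : 0 < ‖x - y‖ := by simpa [sub_eq_zero] using hxy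
  refine ⟨?_, ?_⟩
  · have := Real.log_nonpos (x := 1 - kk x y) (by linarith) (by linarith)
    linarith
  · have hD0 : 0 < Complex.normSq (1 - zc x * conj (zc y)) := by
      rw [normSq_den]; positivity
    have hD : Complex.normSq (1 - zc x * conj (zc y)) ≤ 2^2 := by
      rw [Complex.normSq_eq_norm_sq]
      have hx1 : ‖x‖ < 1 := by simpa [diskD] using hx
      have hy1 : ‖y‖ < 1 := by simpa [diskD] using hy
      have : ‖1 - zc x * conj (zc y)‖ ≤ 2 := by
        refine (norm_sub_le _ _).trans ?_
        rw [norm_mul, RCLike.norm_conj, norm_zc, norm_zc, norm_one]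
        nlinarith [norm_nonneg x, norm_nonneg y]
      gcongr
    rw [one_sub_kk hx hy, Real.log_div (by positivity) hD0.ne', Real.log_pow]
    have h2 : Real.log (Complex.normSq (1 - zc x * conj (zc y))) ≤ 2 * Real.log 2 := by
      have := Real.log_le_log hD0 hD
      rw [Real.log_pow] at this; exact_mod_cast this
    have h3 := Real.log_le_self (x := 2 * ‖x - y‖⁻¹) (by positivity)
    rw [Real.log_mul (by norm_num) (by positivity), Real.log_inv] at h3
    push_cast
    linarith

instance : IsFiniteMeasure muD := by
  unfold muD
  exact ⟨by rw [Measure.restrict_apply_univ]; exact measure_ball_lt_top⟩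

lemma ae_muD : ∀ᵐ x ∂muD, x ∈ diskD :=
  ae_restrict_mem Metric.isOpen_ball.measurableSet

instance : NullSingletonClass muD := by unfold muD; infer_instance

/-- generic points -/
def Good (p : E2 × E2) : Prop := p.1 ∈ diskD ∧ p.2 ∈ diskD ∧ p.1 ≠ 0 ∧ p.2 ≠ 0 ∧ p.1 ≠ p.2

lemma ae_good : ∀ᵐ p ∂(muD.prod muD), Good p := by
  have hd : MeasurableSet diskD := Metric.isOpen_ball.measurableSet
  have hne : MeasurableSet {p : E2 × E2 | p.1 ≠ p.2} :=
    (isOpen_ne_fun continuous_fst continuous_snd).measurableSet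
  have h0 : ∀ᵐ x ∂muD, x ≠ 0 := by
    rw [ae_iff]; simp
  have h1 : ∀ᵐ p ∂(muD.prod muD), p.1 ≠ p.2 := by
    rw [Measure.ae_prod_iff_ae_ae hne]
    refine Eventually.of_forall fun x => ?_
    rw [ae_iff]; simp
  have f1 : Measure.QuasiMeasurePreserving (Prod.fst : E2 × E2 → E2) (muD.prod muD) muD :=
    Measure.quasiMeasurePreserving_fst
  have f2 : Measure.QuasiMeasurePreserving (Prod.snd : E2 × E2 → E2) (muD.prod muD) muD :=
    Measure.quasiMeasurePreserving_snd
  filter_upwards [h1, f1.ae ae_muD, f2.ae ae_muD, f1.ae h0, f2.ae h0] with p a b c d e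
  exact ⟨b, c, d, e, a⟩

lemma measurable_kk : Measurable (fun p : E2 × E2 => kk p.1 p.2) := by
  have h1 := continuous_zc.measurable
  have h2 := continuous_pp.measurable
  have h3 : Measurable Complex.normSq := Complex.continuous_normSq.measurable
  have h4 : Measurable (conj : ℂ → ℂ) := Complex.continuous_conj.measurable
  unfold kk
  fun_prop

lemma inv_norm_integrable :
    Integrable (fun p : E2 × E2 => ‖p.1 - p.2‖⁻¹) (muD.prod muD) := by
  have hd : MeasurableSet diskD := Metric.isOpen_ball.measurableSet
  have hb : MeasurableSet (Metric.ball (0:E2) 2) := Metric.isOpen_ball.measurableSet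
  have hg : Integrable ((Metric.ball (0:E2) 2).indicator (fun z : E2 => ‖z‖⁻¹)) volume := by
    rw [integrable_indicator_iff hb]
    apply integrableOn_ball_of_norm_le_rpow (C := 1) (α := 1)
    · simp
    · refine Eventually.of_forall fun x => ?_
      simp [Real.rpow_neg_one]
    · exact (measurable_norm.inv).aestronglyMeasurable
    · simp
  have hf : Integrable (diskD.indicator (fun _ : E2 => (1:ℝ))) volume := by
    rw [integrable_indicator_iff hd]
    exact integrableOn_const (by exact measure_ball_lt_top.ne)
  have h := hf.convolution_integrand (ContinuousLinearMap.mul ℝ ℝ) hg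
  have h' : Integrable _ (muD.prod muD) := (by
    unfold muD
    rw [Measure.prod_restrict]
    exact h.restrict)
  refine h'.congr ?_
  filter_upwards [ae_good] with p hp
  have h1 : ‖p.1‖ < 1 := by simpa [diskD] using hp.1
  have h2 : ‖p.2‖ < 1 := by simpa [diskD] using hp.2.1
  have h3 : p.1 - p.2 ∈ Metric.ball (0:E2) 2 := by
    simp only [Metric.mem_ball, dist_zero_right]
    have := norm_sub_le p.1 p.2
    linarith
  simp [Set.indicator_of_mem hp.2.1, Set.indicator_of_mem h3]

lemma log_integrable :
    Integrable (fun p : E2 × E2 => -Real.log (1 - kk p.1 p.2)) (muD.prod muD) := by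
  refine (inv_norm_integrable.const_mul 4).mono' ?_ ?_
  · exact ((Real.measurable_log.comp (measurable_const.sub measurable_kk)).neg).aestronglyMeasurable
  · filter_upwards [ae_good] with p hp
    have := log_bound hp.1 hp.2.1 hp.2.2.2.2
    rw [Real.norm_of_nonneg this.1]; exact this.2

/-- Feature expansion of a normalized positive-definite kernel on the disk. -/
def FeatRep (ι : Type) (φ : ι → E2 → ℂ) (k : E2 → E2 → ℝ) : Prop :=
  (∀ i, Measurable (φ i)) ∧ (∀ x ∈ diskD, HasSum (fun i => ‖φ i x‖^2) 1) ∧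
  ∀ x ∈ diskD, ∀ y ∈ diskD, HasSum (fun i => φ i x * conj (φ i y)) (k x y : ℂ)

lemma FeatRep.mul {ι κ : Type} {φ : ι → E2 → ℂ} {ψ : κ → E2 → ℂ} {k l : E2 → E2 → ℝ}
    (h1 : FeatRep ι φ k) (h2 : FeatRep κ ψ l) :
    FeatRep (ι × κ) (fun i x => φ i.1 x * ψ i.2 x) (fun x y => k x y * l x y) := by
  obtain ⟨m1, n1, s1⟩ := h1
  obtain ⟨m2, n2, s2⟩ := h2
  have key : ∀ x ∈ diskD, Summable (fun i : ι × κ => ‖φ i.1 x * ψ i.2 x‖^2) := by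
    intro x hx
    have := (n1 x hx).summable.mul_of_nonneg (n2 x hx).summable
      (fun i => by positivity) (fun i => by positivity)
    refine this.congr fun i => ?_
    rw [norm_mul, mul_pow]
  refine ⟨fun i => (m1 _).mul (m2 _), fun x hx => ?_, fun x hx y hy => ?_⟩
  · have := (n1 x hx).mul (n2 x hx) (by
      refine (key x hx).congr fun i => ?_
      rw [norm_mul, mul_pow])
    simpa [mul_pow] using this
  · have hs : Summable (fun i : ι × κ =>
        (φ i.1 x * conj (φ i.1 y)) * (ψ i.2 x * conj (ψ i.2 y))) := by
      refine Summable.of_norm_bounded ((key x hx).add (key y hy)) fun i => ?_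
      rw [show (φ i.1 x * conj (φ i.1 y)) * (ψ i.2 x * conj (ψ i.2 y))
        = (φ i.1 x * ψ i.2 x) * conj (φ i.1 y * ψ i.2 y) by rw [map_mul]; ring]
      rw [norm_mul, RCLike.norm_conj]
      nlinarith [sq_nonneg (‖φ i.1 x * ψ i.2 x‖ - ‖φ i.1 y * ψ i.2 y‖),
        sq_nonneg (‖φ i.1 x * ψ i.2 x‖), sq_nonneg ‖φ i.1 y * ψ i.2 y‖]
    have := (s1 x hx y hy).mul (s2 x hx y hy) hs
    rw [Complex.ofReal_mul]
    refine this.congr_fun ?_ 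
    intro i
    simp only [map_mul]; ring

/-- The basic features. -/
def phi0 (i : ℕ × ℕ) (x : E2) : ℂ := pp x * (zc x ^ i.1 * conj (zc x) ^ i.2)

lemma geom2 {a b : ℂ} (ha : ‖a‖ < 1) (hb : ‖b‖ < 1) :
    HasSum (fun i : ℕ × ℕ => a ^ i.1 * b ^ i.2) ((1 - a)⁻¹ * (1 - b)⁻¹) := by
  refine (hasSum_geometric_of_norm_lt_one ha).mul (hasSum_geometric_of_norm_lt_one hb) ?_
  exact summable_mul_of_summable_norm (summable_norm_geometric_of_norm_lt_one ha)
    (summable_norm_geometric_of_norm_lt_one hb)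

lemma phi0_hasSum {x y : E2} (hx : x ∈ diskD) (hy : y ∈ diskD) :
    HasSum (fun i => phi0 i x * conj (phi0 i y)) (kk x y : ℂ) := by
  have hx1 : ‖x‖ < 1 := by simpa [diskD] using hx
  have hy1 : ‖y‖ < 1 := by simpa [diskD] using hy
  have hxy : ‖x‖ * ‖y‖ < 1 := by nlinarith [norm_nonneg x, norm_nonneg y]
  have ha : ‖zc x * conj (zc y)‖ < 1 := by
    rwa [norm_mul, RCLike.norm_conj, norm_zc, norm_zc]
  have hb : ‖conj (zc x) * zc y‖ < 1 := by
    rwa [norm_mul, RCLike.norm_conj, norm_zc, norm_zc]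
  have h := (geom2 ha hb).mul_left ((pp x * pp y : ℝ) : ℂ)
  have e : ((pp x * pp y : ℝ) : ℂ) * ((1 - zc x * conj (zc y))⁻¹ * (1 - conj (zc x) * zc y)⁻¹)
      = (kk x y : ℂ) := by
    unfold kk
    rw [Complex.ofReal_div, Complex.normSq_eq_conj_mul_self]
    simp only [map_sub, map_mul, map_one, Complex.conj_conj]
    rw [div_eq_mul_inv, mul_inv, mul_comm (1 - conj (zc x) * zc y)⁻¹]
  rw [e] at h
  refine h.congr_fun ?_
  intro i
  simp only [phi0, map_mul, map_pow, Complex.conj_conj, Complex.conj_ofReal, Complex.ofReal_mul]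
  ring

lemma kk_self {x : E2} (hx : x ∈ diskD) : kk x x = 1 := by
  have := one_sub_kk hx hx
  simp at this; linarith

lemma phi0_rep : FeatRep (ℕ × ℕ) phi0 kk := by
  refine ⟨fun i => ?_, fun x hx => ?_, fun x hx y hy => phi0_hasSum hx hy⟩
  · have h1 := continuous_zc
    have h2 := continuous_pp
    have h4 : Continuous (conj : ℂ → ℂ) := Complex.continuous_conj
    have : Continuous (phi0 i) := by unfold phi0; fun_prop
    exact this.measurable
  · have := phi0_hasSum hx hx
    rw [kk_self hx] at this
    simp only [Complex.mul_conj, Complex.normSq_eq_norm_sq] at this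
    exact_mod_cast this

lemma pow_rep (n : ℕ) : ∃ (ι : Type) (_ : Countable ι) (φ : ι → E2 → ℂ),
    FeatRep ι φ (fun x y => kk x y ^ (n+1)) := by
  induction n with
  | zero => exact ⟨ℕ × ℕ, inferInstance, phi0, by simpa using phi0_rep⟩
  | succ n ih =>
    obtain ⟨ι, hι, φ, h⟩ := ih
    exact ⟨ι × (ℕ × ℕ), inferInstance, _, by simpa [pow_succ] using h.mul phi0_rep⟩

/-- The bounded functions. -/
def Bdd (f : E2 → ℝ) : Prop := AEMeasurable f muD ∧ ∃ C, ∀ᵐ x ∂muD, |f x| ≤ C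

lemma Bdd.prod {f g : E2 → ℝ} (hf : Bdd f) (hg : Bdd g) :
    AEStronglyMeasurable (fun p : E2 × E2 => f p.1 * g p.2) (muD.prod muD) ∧
    ∃ C, 0 ≤ C ∧ ∀ᵐ p ∂(muD.prod muD), ‖f p.1 * g p.2‖ ≤ C := by
  obtain ⟨mf, C, hC⟩ := hf
  obtain ⟨mg, C', hC'⟩ := hg
  refine ⟨mf.aestronglyMeasurable.comp_fst.mul mg.aestronglyMeasurable.comp_snd,
    |C| * |C'|, by positivity, ?_⟩
  have f1 : Measure.QuasiMeasurePreserving (Prod.fst : E2 × E2 → E2) (muD.prod muD) muD :=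
    Measure.quasiMeasurePreserving_fst
  have f2 : Measure.QuasiMeasurePreserving (Prod.snd : E2 × E2 → E2) (muD.prod muD) muD :=
    Measure.quasiMeasurePreserving_snd
  filter_upwards [f1.ae hC, f2.ae hC'] with p h1 h2
  rw [norm_mul, Real.norm_eq_abs, Real.norm_eq_abs]
  exact mul_le_mul (h1.trans (le_abs_self _)) (h2.trans (le_abs_self _)) (abs_nonneg _) (abs_nonneg _)

lemma FeatRep.hasSum_integral {ι : Type} [Countable ι] {φ : ι → E2 → ℂ} {k : E2 → E2 → ℝ}
    (h : FeatRep ι φ k) {f : E2 → ℝ} (hf : Bdd f) :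
    HasSum (fun i => ‖∫ x, (f x : ℂ) * φ i x ∂muD‖^2)
      (∫ p, k p.1 p.2 * (f p.1 * f p.2) ∂(muD.prod muD)) := by
  obtain ⟨m, n, s⟩ := h
  obtain ⟨mm, C, hC0, hC⟩ := hf.prod hf
  have main : HasSum (fun i => ∫ p : E2 × E2, ((f p.1 : ℂ) * φ i p.1) * conj ((f p.2 : ℂ) * φ i p.2)
      ∂(muD.prod muD))
      (∫ p, ((k p.1 p.2 * (f p.1 * f p.2) : ℝ) : ℂ) ∂(muD.prod muD)) := by
    refine hasSum_integral_of_dominated_convergence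
      (fun i p => C * ((‖φ i p.1‖^2 + ‖φ i p.2‖^2))) (fun i => ?_) (fun i => ?_) ?_ ?_ ?_
    · have hc : Continuous (conj : ℂ → ℂ) := Complex.continuous_conj
      have h1 : AEStronglyMeasurable (fun x => (f x : ℂ) * φ i x) muD :=
        (Complex.measurable_ofReal.comp_aemeasurable hf.1).aestronglyMeasurable.mul
          (m i).aestronglyMeasurable
      exact h1.comp_fst.mul (hc.comp_aestronglyMeasurable h1.comp_snd)
    · filter_upwards [hC] with p hp
      have e : ‖((f p.1 : ℂ) * φ i p.1) * conj ((f p.2 : ℂ) * φ i p.2)‖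
          = ‖f p.1 * f p.2‖ * (‖φ i p.1‖ * ‖φ i p.2‖) := by
        simp only [norm_mul, RCLike.norm_conj, Complex.norm_real]; ring
      rw [e]
      refine mul_le_mul hp ?_ (by positivity) hC0
      nlinarith [sq_nonneg (‖φ i p.1‖ - ‖φ i p.2‖), sq_nonneg (‖φ i p.1‖), sq_nonneg ‖φ i p.2‖]
    · filter_upwards [ae_good] with p hp
      exact (((n _ hp.1).add (n _ hp.2.1)).mul_left C).summable
    · refine (integrable_const (C * (1 + 1))).congr ?_
      filter_upwards [ae_good] with p hp
      exact (((n _ hp.1).add (n _ hp.2.1)).mul_left C).tsum_eq.symm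
    · filter_upwards [ae_good] with p hp
      have := (s _ hp.1 _ hp.2.1).mul_right ((f p.1 * f p.2 : ℝ) : ℂ)
      rw [← Complex.ofReal_mul] at this
      refine this.congr_fun ?_
      intro i
      simp only [map_mul, Complex.conj_ofReal, Complex.ofReal_mul]; ring
  rw [integral_complex_ofReal] at main
  have e : ∀ i, ∫ p : E2 × E2, ((f p.1 : ℂ) * φ i p.1) * conj ((f p.2 : ℂ) * φ i p.2)
      ∂(muD.prod muD) = ((‖∫ x, (f x : ℂ) * φ i x ∂muD‖^2 : ℝ) : ℂ) := by
    intro i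
    rw [integral_prod_mul (fun x => (f x : ℂ) * φ i x) (fun x => conj ((f x : ℂ) * φ i x)),
      integral_conj, Complex.mul_conj, Complex.normSq_eq_norm_sq]
  simp only [e] at main
  exact_mod_cast main

lemma kernel_integrable {f g : E2 → ℝ} (hf : Bdd f) (hg : Bdd g) {k : E2 × E2 → ℝ}
    (hk : Integrable k (muD.prod muD)) :
    Integrable (fun p => k p * (f p.1 * g p.2)) (muD.prod muD) := by
  obtain ⟨mm, C, hC0, hC⟩ := hf.prod hg
  exact hk.mul_bdd mm hC

lemma energy_hasSum {f : E2 → ℝ} (hf : Bdd f) :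
    HasSum (fun n : ℕ => ∫ p, kk p.1 p.2 ^ (n+1) / ((n:ℝ)+1) * (f p.1 * f p.2) ∂(muD.prod muD))
      (∫ p, -Real.log (1 - kk p.1 p.2) * (f p.1 * f p.2) ∂(muD.prod muD)) := by
  obtain ⟨mm, C, hC0, hC⟩ := hf.prod hf
  have hl : ∀ p : E2 × E2, Good p →
      HasSum (fun n : ℕ => kk p.1 p.2 ^ (n+1) / ((n:ℝ)+1)) (-Real.log (1 - kk p.1 p.2)) := by
    intro p hp
    apply Real.hasSum_pow_div_log_of_abs_lt_one
    rw [abs_of_nonneg (kk_nonneg hp.1 hp.2.1)]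
    exact kk_lt_one hp.1 hp.2.1 hp.2.2.2.2
  refine hasSum_integral_of_dominated_convergence
    (fun n p => kk p.1 p.2 ^ (n+1) / ((n:ℝ)+1) * C) (fun n => ?_) (fun n => ?_) ?_ ?_ ?_
  · exact (((measurable_kk.pow_const _).div_const _).aestronglyMeasurable).mul mm
  · filter_upwards [ae_good, hC] with p hp hc
    have := kk_nonneg hp.1 hp.2.1
    rw [norm_mul, Real.norm_of_nonneg (by positivity)]
    gcongr
  · filter_upwards [ae_good] with p hp
    exact ((hl p hp).mul_right C).summable
  · refine (log_integrable.mul_const C).congr ?_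
    filter_upwards [ae_good] with p hp
    exact ((hl p hp).mul_right C).tsum_eq.symm
  · filter_upwards [ae_good] with p hp
    exact (hl p hp).mul_right _

lemma energy_term_nonneg {f : E2 → ℝ} (hf : Bdd f) (n : ℕ) :
    0 ≤ ∫ p, kk p.1 p.2 ^ (n+1) / ((n:ℝ)+1) * (f p.1 * f p.2) ∂(muD.prod muD) := by
  obtain ⟨ι, hι, φ, h⟩ := pow_rep n
  have := (h.hasSum_integral hf).nonneg (fun i => by positivity)
  have e : ∀ p : E2 × E2, kk p.1 p.2 ^ (n+1) / ((n:ℝ)+1) * (f p.1 * f p.2)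
    = ((n:ℝ)+1)⁻¹ * (kk p.1 p.2 ^ (n+1) * (f p.1 * f p.2)) := fun p => by ring
  simp only [e]
  rw [integral_const_mul]
  positivity

lemma energy_nonneg {f : E2 → ℝ} (hf : Bdd f) :
    0 ≤ ∫ p, -Real.log (1 - kk p.1 p.2) * (f p.1 * f p.2) ∂(muD.prod muD) :=
  (energy_hasSum hf).nonneg (energy_term_nonneg hf)

lemma energy_zero {f : E2 → ℝ} (hf : Bdd f)
    (h0 : ∫ p, -Real.log (1 - kk p.1 p.2) * (f p.1 * f p.2) ∂(muD.prod muD) ≤ 0) (i : ℕ × ℕ) :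
    ∫ x, (f x : ℂ) * phi0 i x ∂muD = 0 := by
  have h1 := energy_hasSum hf
  have h2 := le_hasSum h1 0 (fun n _ => energy_term_nonneg hf n)
  simp only [zero_add, pow_one, Nat.cast_zero, div_one] at h2
  have h3 := phi0_rep.hasSum_integral hf
  have h4 := le_hasSum h3 i (fun n _ => by positivity)
  have h5 : ‖∫ x, (f x : ℂ) * phi0 i x ∂muD‖^2 ≤ 0 := h4.trans (h2.trans h0)
  have h6 : ‖∫ x, (f x : ℂ) * phi0 i x ∂muD‖ = 0 := by
    exact pow_eq_zero_iff (two_ne_zero) |>.1 (le_antisymm h5 (by positivity))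
  exact norm_eq_zero.1 h6

lemma exp_hasSum_c (z : ℂ) : HasSum (fun n : ℕ => z ^ n / (n.factorial : ℂ)) (Complex.exp z) := by
  rw [Complex.exp_eq_exp_ℂ]; exact NormedSpace.expSeries_div_hasSum_exp z

lemma exp_hasSum_r (z : ℝ) : HasSum (fun n : ℕ => z ^ n / (n.factorial : ℝ)) (Real.exp z) := by
  rw [Real.exp_eq_exp_ℝ]; exact NormedSpace.expSeries_div_hasSum_exp z

lemma exp_summable_norm (z : ℂ) : Summable (fun n : ℕ => ‖z ^ n / (n.factorial : ℂ)‖) := by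
  refine (exp_hasSum_r ‖z‖).summable.congr fun n => ?_
  simp

lemma hasSum_mul_c {f g : ℕ → ℂ} {a b : ℂ} (hf : HasSum f a) (hg : HasSum g b)
    (nf : Summable (fun n => ‖f n‖)) (ng : Summable (fun n => ‖g n‖)) :
    HasSum (fun i : ℕ × ℕ => f i.1 * g i.2) (a * b) :=
  hf.mul hg (summable_mul_of_summable_norm nf ng)

lemma hasSum_mul_r {f g : ℕ → ℝ} {a b : ℝ} (hf : HasSum f a) (hg : HasSum g b)
    (nf : 0 ≤ f) (ng : 0 ≤ g) :
    HasSum (fun i : ℕ × ℕ => f i.1 * g i.2) (a * b) :=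
  hf.mul hg (hf.summable.mul_of_nonneg hg.summable nf ng)

lemma exp_hasSum2 (a b : ℂ) :
    HasSum (fun i : ℕ × ℕ => (a ^ i.1 / (i.1.factorial : ℂ)) * (b ^ i.2 / (i.2.factorial : ℂ)))
      (Complex.exp (a + b)) ∧
    HasSum (fun i : ℕ × ℕ => (‖a‖ ^ i.1 / (i.1.factorial : ℝ)) * (‖b‖ ^ i.2 / (i.2.factorial : ℝ)))
      (Real.exp (‖a‖ + ‖b‖)) := by
  have p1 : ∀ z : ℂ, 0 ≤ (fun n : ℕ => ‖z‖ ^ n / (n.factorial : ℝ)) :=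
    fun z n => div_nonneg (pow_nonneg (norm_nonneg _) _) (Nat.cast_nonneg _)
  refine ⟨?_, ?_⟩
  · rw [Complex.exp_add]
    have h := hasSum_mul_c (exp_hasSum_c a) (exp_hasSum_c b) (exp_summable_norm a) (exp_summable_norm b)
    exact h
  · rw [Real.exp_add]
    have h := hasSum_mul_r (exp_hasSum_r ‖a‖) (exp_hasSum_r ‖b‖) (p1 a) (p1 b)
    exact h

lemma inner_eq (x t : E2) : ((inner ℝ x t : ℝ) : ℂ) * Complex.I
    = (Complex.I / 2 * conj (zc t)) * zc x + (Complex.I / 2 * zc t) * conj (zc x) := by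
  have : (inner ℝ x t : ℝ) = x 0 * t 0 + x 1 * t 1 := by
    simp [PiLp.inner_apply, Fin.sum_univ_two]; ring
  rw [this]
  apply Complex.ext <;> simp [zc] <;> ring

lemma moments_exp {f : E2 → ℝ} (hf : Bdd f)
    (h0 : ∀ i, ∫ x, (f x : ℂ) * phi0 i x ∂muD = 0) (t : E2) :
    ∫ x, ((f x * pp x : ℝ) : ℂ) * Complex.exp ((inner ℝ x t : ℝ) * Complex.I) ∂muD = 0 := by
  obtain ⟨mf, C, hC⟩ := hf
  set a : ℂ := Complex.I / 2 * conj (zc t) with ha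
  set b : ℂ := Complex.I / 2 * zc t with hb
  have key : HasSum (fun i : ℕ × ℕ => ∫ x, ((a ^ i.1 / (i.1.factorial : ℂ)) *
      (b ^ i.2 / (i.2.factorial : ℂ))) * ((f x : ℂ) * phi0 i x) ∂muD)
      (∫ x, ((f x * pp x : ℝ) : ℂ) * Complex.exp ((inner ℝ x t : ℝ) * Complex.I) ∂muD) := by
    refine hasSum_integral_of_dominated_convergence (fun i x =>
      (‖a‖ ^ i.1 / (i.1.factorial : ℝ)) * (‖b‖ ^ i.2 / (i.2.factorial : ℝ)) * C)
      (fun i => ?_) (fun i => ?_) ?_ ?_ ?_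
    · exact ((Complex.measurable_ofReal.comp_aemeasurable mf).mul
        (phi0_rep.1 i).aemeasurable).const_mul _ |>.aestronglyMeasurable
    · filter_upwards [hC, ae_muD] with x hx hd
      have hp : ‖phi0 i x‖ ≤ 1 := by
        have := le_hasSum (phi0_rep.2.1 x hd) i (fun n _ => by positivity)
        exact (sq_le_one_iff₀ (norm_nonneg _)).1 this
      rw [norm_mul, norm_mul, norm_mul]
      simp only [norm_div, norm_pow, Complex.norm_natCast, Complex.norm_real]
      have : ‖f x‖ * ‖phi0 i x‖ ≤ C := by
        calc ‖f x‖ * ‖phi0 i x‖ ≤ ‖f x‖ * 1 := by gcongr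
          _ ≤ C := by rw [mul_one]; exact hx
      gcongr
    · exact Eventually.of_forall fun x => ((exp_hasSum2 a b).2.mul_right C).summable
    · exact integrable_const _
    · refine Eventually.of_forall fun x => ?_
      have h := (exp_hasSum2 (a * zc x) (b * conj (zc x))).1.mul_left ((f x * pp x : ℝ) : ℂ)
      rw [← inner_eq] at h
      refine h.congr_fun ?_
      intro i
      simp only [phi0, mul_pow, Complex.ofReal_mul]
      ring
  simp only [integral_const_mul, h0, mul_zero] at key
  exact key.unique hasSum_zero

lemma Bdd.integrable {f : E2 → ℝ} (hf : Bdd f) : Integrable f muD := by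
  obtain ⟨mf, C, hC⟩ := hf
  exact (integrable_const C).mono' mf.aestronglyMeasurable hC

lemma Kset.bdd {lam : ℝ} {w : E2 → ℝ} (h : w ∈ Kset lam) : Bdd w :=
  ⟨h.1, lam, by filter_upwards [h.2.1] with x hx; rw [abs_of_nonneg hx.1]; exact hx.2⟩

lemma Bdd.sub {f g : E2 → ℝ} (hf : Bdd f) (hg : Bdd g) : Bdd (fun x => f x - g x) := by
  obtain ⟨mf, C, hC⟩ := hf
  obtain ⟨mg, C', hC'⟩ := hg
  refine ⟨mf.sub mg, C + C', ?_⟩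
  filter_upwards [hC, hC'] with x h1 h2
  exact (abs_sub _ _).trans (add_le_add h1 h2)

lemma Bdd.mul {f g : E2 → ℝ} (hf : Bdd f) (hg : Bdd g) : Bdd (fun x => f x * g x) := by
  obtain ⟨mf, C, hC⟩ := hf
  obtain ⟨mg, C', hC'⟩ := hg
  refine ⟨mf.mul mg, |C| * |C'|, ?_⟩
  filter_upwards [hC, hC'] with x h1 h2
  rw [abs_mul]
  exact mul_le_mul (h1.trans (le_abs_self _)) (h2.trans (le_abs_self _)) (abs_nonneg _) (abs_nonneg _)

lemma bdd_normsq : Bdd (fun x => ‖x‖^2) := by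
  refine ⟨by fun_prop, 1, ?_⟩
  filter_upwards [ae_muD] with x hx
  have : ‖x‖ < 1 := by simpa [diskD] using hx
  rw [abs_of_nonneg (by positivity)]
  nlinarith [norm_nonneg x]

lemma bdd_pp : Bdd pp := by
  refine ⟨continuous_pp.measurable.aemeasurable, 1, ?_⟩
  filter_upwards [ae_muD] with x hx
  rw [abs_of_nonneg (pp_pos hx).le]
  unfold pp; nlinarith [sq_nonneg ‖x‖]

lemma eq_of_moments {v w : E2 → ℝ} (hv : Bdd v) (hw : Bdd w) (v0 : ∀ᵐ x ∂muD, 0 ≤ v x)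
    (w0 : ∀ᵐ x ∂muD, 0 ≤ w x)
    (h0 : ∀ i, ∫ x, ((v x - w x : ℝ) : ℂ) * phi0 i x ∂muD = 0) : v =ᵐ[muD] w := by
  have Iv := (hv.mul bdd_pp).integrable
  have Iw := (hw.mul bdd_pp).integrable
  have Mv : AEMeasurable (fun x => ENNReal.ofReal (v x * pp x)) muD := Iv.1.aemeasurable.ennreal_ofReal
  have Mw : AEMeasurable (fun x => ENNReal.ofReal (w x * pp x)) muD := Iw.1.aemeasurable.ennreal_ofReal
  have : IsFiniteMeasure (muD.withDensity (fun x => ENNReal.ofReal (v x * pp x))) :=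
    isFiniteMeasure_withDensity_ofReal Iv.2
  have : IsFiniteMeasure (muD.withDensity (fun x => ENNReal.ofReal (w x * pp x))) :=
    isFiniteMeasure_withDensity_ofReal Iw.2
  have hcf : ∀ u : E2 → ℝ, Bdd u → (∀ᵐ x ∂muD, 0 ≤ u x) → ∀ t,
      charFun (muD.withDensity (fun x => ENNReal.ofReal (u x * pp x))) t
      = ∫ x, ((u x * pp x : ℝ) : ℂ) * Complex.exp ((inner ℝ x t : ℝ) * Complex.I) ∂muD := by
    intro u hu u0 t
    rw [charFun_apply, integral_withDensity_eq_integral_toReal_smul₀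
      ((hu.mul bdd_pp).1.ennreal_ofReal) (Eventually.of_forall fun x => ENNReal.ofReal_lt_top)]
    refine integral_congr_ae ?_
    filter_upwards [u0, ae_muD] with x hx hd
    rw [ENNReal.toReal_ofReal (mul_nonneg hx (pp_pos hd).le), Complex.real_smul]
  have hE : ∀ u : E2 → ℝ, Bdd u → ∀ t : E2,
      Integrable (fun x => ((u x * pp x : ℝ) : ℂ) * Complex.exp ((inner ℝ x t : ℝ) * Complex.I)) muD := by
    intro u hu t
    refine (hu.mul bdd_pp).integrable.ofReal.mul_bdd (c := 1) ?_ ?_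
    · have : Continuous fun x : E2 => Complex.exp ((inner ℝ x t : ℝ) * Complex.I) := by fun_prop
      exact this.aestronglyMeasurable
    · exact Eventually.of_forall fun x => by rw [Complex.norm_exp_ofReal_mul_I]
  have heq : muD.withDensity (fun x => ENNReal.ofReal (v x * pp x))
      = muD.withDensity (fun x => ENNReal.ofReal (w x * pp x)) := by
    apply Measure.ext_of_charFun
    funext t
    rw [hcf v hv v0, hcf w hw w0, ← sub_eq_zero, ← integral_sub (hE v hv t) (hE w hw t),
      ← moments_exp (hv.sub hw) h0 t]
    congr 1
    funext x
    push_cast; ring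
  rw [withDensity_eq_iff_of_sigmaFinite Mv Mw] at heq
  filter_upwards [heq, v0, w0, ae_muD] with x hx h1 h2 hd
  have hp := pp_pos hd
  rw [ENNReal.ofReal_eq_ofReal_iff (by positivity) (by positivity)] at hx
  exact mul_right_cancel₀ hp.ne' hx

lemma greenG_ae : (fun p : E2 × E2 => greenG p.1 p.2) =ᵐ[muD.prod muD]
    fun p => (1/(4*π)) * (-Real.log (1 - kk p.1 p.2)) := by
  filter_upwards [ae_good] with p hp
  exact greenG_eq hp.1 hp.2.1 hp.2.2.2.1 hp.2.2.2.2

lemma greenG_integrable : Integrable (fun p : E2 × E2 => greenG p.1 p.2) (muD.prod muD) :=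
  (log_integrable.const_mul _).congr greenG_ae.symm

/-- The bilinear form. -/
def Bform (f g : E2 → ℝ) : ℝ := ∫ p : E2 × E2, greenG p.1 p.2 * (f p.1 * g p.2) ∂(muD.prod muD)

lemma Bform_symm (f g : E2 → ℝ) : Bform f g = Bform g f := by
  unfold Bform
  rw [← integral_prod_swap]
  refine integral_congr_ae ?_
  filter_upwards [ae_good] with p hp
  simp only [Prod.fst_swap, Prod.snd_swap]
  rw [greenG_eq hp.1 hp.2.1 hp.2.2.2.1 hp.2.2.2.2,
    greenG_eq hp.2.1 hp.1 hp.2.2.1 hp.2.2.2.2.symm, kk_symm]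
  ring

lemma Bform_eq {f g : E2 → ℝ} (hf : Bdd f) (hg : Bdd g) :
    Bform f g = ∫ x, ∫ y, greenG x y * (f x * g y) ∂muD ∂muD :=
  integral_prod _ (kernel_integrable hf hg greenG_integrable)

lemma Efun_eq {w : E2 → ℝ} (hw : Bdd w) : Efun w = (1/2) * Bform w w := by
  rw [Bform_eq hw hw]; unfold Efun muD
  simp only [mul_assoc]

lemma calQ_eq (Ω : ℝ) {w v : E2 → ℝ} (hw : Bdd w) (hv : Bdd v) :
    calQ Ω w v = Bform v w + (Ω/2) * ∫ x, ‖x‖^2 * v x ∂muD := by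
  have h1 := (kernel_integrable hv hw greenG_integrable).integral_prod_left
  have h2 := ((bdd_normsq.mul hv).integrable).const_mul (Ω/2)
  rw [Bform_eq hv hw, ← integral_const_mul, ← integral_add h1 h2]
  unfold calQ
  change ∫ x, ((∫ y, greenG x y * w y ∂muD) + (Ω/2) * ‖x‖^2) * v x ∂muD = _
  congr 1
  funext x
  rw [add_mul, ← integral_mul_const, mul_assoc]
  congr 2
  funext y; ring

lemma Bform_sub_sub {v w : E2 → ℝ} (hv : Bdd v) (hw : Bdd w) :
    Bform (fun x => v x - w x) (fun x => v x - w x)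
      = Bform v v - 2 * Bform v w + Bform w w := by
  have hvv := kernel_integrable hv hv greenG_integrable
  have hvw := kernel_integrable hv hw greenG_integrable
  have hwv := kernel_integrable hw hv greenG_integrable
  have hww := kernel_integrable hw hw greenG_integrable
  have : Bform v v - Bform v w - Bform w v + Bform w w =
      Bform (fun x => v x - w x) (fun x => v x - w x) := by
    unfold Bform
    have i1 := integral_sub' hvv hvw
    have i2 := integral_sub' (hvv.sub hvw) hwv
    have i3 := integral_add' ((hvv.sub hvw).sub hwv) hww
    rw [← i1, ← i2, ← i3]
    congr 1
    funext p
    simp only [Pi.sub_apply, Pi.add_apply]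
    ring
  rw [← this, Bform_symm w v]; ring

lemma Bform_log (f : E2 → ℝ) : Bform f f =
    (1/(4*π)) * ∫ p, -Real.log (1 - kk p.1 p.2) * (f p.1 * f p.2) ∂(muD.prod muD) := by
  rw [← integral_const_mul]
  refine integral_congr_ae ?_
  filter_upwards [greenG_ae] with p hp
  rw [hp, mul_assoc]

theorem stmt7 (Ω lam : ℝ) (hΩ : 0 < Ω) (hlam : 1/π < lam)
    (wlam : E2 → ℝ) (hmem : wlam ∈ Kset lam)
    (hmax : ∀ v ∈ Kset lam, calE Ω v ≤ calE Ω wlam) :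
    ∀ v ∈ Kset lam, calQ Ω wlam v ≤ calQ Ω wlam wlam ∧
      (calQ Ω wlam v = calQ Ω wlam wlam → v =ᵐ[muD] wlam) := by
  intro v hv
  have bw := Kset.bdd hmem
  have bv := Kset.bdd hv
  have h := hmax v hv
  unfold calE at h
  rw [Efun_eq bw, Efun_eq bv] at h
  change _ + (Ω/2) * ∫ x, ‖x‖^2 * v x ∂muD ≤ _ + (Ω/2) * ∫ x, ‖x‖^2 * wlam x ∂muD at h
  rw [calQ_eq Ω bw bv, calQ_eq Ω bw bw]
  have e := Bform_sub_sub bv bw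
  rw [Bform_log (fun x => v x - wlam x)] at e
  have n := energy_nonneg (bv.sub bw)
  have c : 0 < 1/(4*π) := by positivity
  have n' := mul_nonneg c.le n
  refine ⟨by linarith, fun heq => ?_⟩
  refine eq_of_moments bv bw (hv.2.1.mono fun x hx => hx.1) (hmem.2.1.mono fun x hx => hx.1) ?_
  refine energy_zero (bv.sub bw) ?_
  by_contra hc
  have := mul_pos c (not_le.1 hc)
  linarith
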